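/- arXiv:1902.03734 — 2 statements merged into one kernel-verified Lean document; each statement's English description precedes it below -/
import Mathlib

section
/- Assume the ABC-Conjecture. Let f_{11}, ..., f_{1l}, f_{21}, ..., f_{2m}, g_1, ..., g_n ∈ ℤ[x] and let α_1, ..., α_l, β_1, ..., β_m, γ_1, ..., γ_n be positive integers. Set f(x) = f_{11}(x)^{α_1}···f_{1l}(x)^{α_l} + f_{21}(x)^{β_1}···f_{2m}(x)^{β_m} (or with a minus sign in place of the plus sign) and g(y) = g_1(y)^{γ_1}···g_n(y)^{γ_n}. Suppose (1) deg g > deg f; (2) deg f > 1 + deg(f_{11}·f_{12}···f_{1l}·f_{21}···f_{2m}·g_1···g_n); (3) the polynomials f_{11}·f_{12}···f_{1l} and f_{21}···f_{2m} have no non-constant common factor in ℤ[x]; (4) the leading coefficient of each of f_{11}···f_{1l}, f_{21}···f_{2m}, and g_1···g_n is positive. Then the equation f(x) = g(y) has only finitely many solutions (x, y) in integers. -/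
open Polynomial

/-- The ABC-Conjecture: for every `ε > 0` there is a constant `C` such that for all
coprime positive integers `a`, `b`, `c` with `a + b = c`, we have
`c ≤ C * rad (a * b * c) ^ (1 + ε)`, where `rad n` is the product of the distinct
prime divisors of `n`. -/
def ABCConjecture : Prop :=
  ∀ ε : ℝ, 0 < ε → ∃ C : ℝ, ∀ a b c : ℕ, 0 < a → 0 < b → 0 < c →
    Nat.Coprime a b → a + b = c →
    (c : ℝ) ≤ C * ((∏ p ∈ (a * b * c).primeFactors, p : ℕ) : ℝ) ^ (1 + ε)


lemma aux_upper (P : Polynomial ℤ) : ∃ C : ℝ, 0 < C ∧ ∀ (x : ℤ) (X : ℝ), 1 ≤ X → |(x : ℝ)| ≤ X →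
    |((P.eval x : ℤ) : ℝ)| ≤ C * X ^ P.natDegree := by
  refine ⟨(∑ i ∈ Finset.range (P.natDegree + 1), |(P.coeff i : ℝ)|) + 1, by positivity, ?_⟩
  intro x X hX hx
  rw [Polynomial.eval_eq_sum_range]
  push_cast
  refine (Finset.abs_sum_le_sum_abs _ _).trans ?_
  have h0 : (0 : ℝ) ≤ X ^ P.natDegree := by positivity
  calc _ ≤ ∑ i ∈ Finset.range (P.natDegree + 1), |(P.coeff i : ℝ)| * X ^ P.natDegree := by
        refine Finset.sum_le_sum fun i hi => ?_
        rw [abs_mul, abs_pow]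
        refine mul_le_mul_of_nonneg_left ?_ (abs_nonneg _)
        calc |(x : ℝ)| ^ i ≤ X ^ i := pow_le_pow_left₀ (abs_nonneg _) hx i
          _ ≤ X ^ P.natDegree := pow_le_pow_right₀ hX (by
              have := Finset.mem_range.1 hi; omega)
    _ ≤ _ := by rw [← Finset.sum_mul]; nlinarith

lemma aux_lower (P : Polynomial ℤ) (hP : P ≠ 0) : ∃ K : ℝ, 1 ≤ K ∧ ∀ x : ℤ, K ≤ |(x : ℝ)| →
    |(x : ℝ)| ^ P.natDegree ≤ 2 * |((P.eval x : ℤ) : ℝ)| := by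
  have hl : (1 : ℝ) ≤ |(P.leadingCoeff : ℝ)| := by
    have h := Int.one_le_abs (leadingCoeff_ne_zero.2 hP)
    exact_mod_cast h
  have key : ∀ x : ℤ, ((P.eval x : ℤ) : ℝ) =
      (P.eraseLead.eval x : ℤ) + (P.leadingCoeff : ℝ) * (x : ℝ) ^ P.natDegree := by
    intro x
    have h := congrArg (fun q => ((eval x q : ℤ) : ℝ)) P.eraseLead_add_monomial_natDegree_leadingCoeff
    simp only [eval_add, eval_monomial] at h
    push_cast at h
    exact h.symm
  have key2 : ∀ x : ℤ, |(x : ℝ)| ^ P.natDegree ≤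
      |((P.eval x : ℤ) : ℝ)| + |((P.eraseLead.eval x : ℤ) : ℝ)| := by
    intro x
    have h1 : |(P.leadingCoeff : ℝ) * (x : ℝ) ^ P.natDegree| ≤
      |((P.eval x : ℤ) : ℝ)| + |((P.eraseLead.eval x : ℤ) : ℝ)| := by
      have : (P.leadingCoeff : ℝ) * (x : ℝ) ^ P.natDegree =
        ((P.eval x : ℤ) : ℝ) - ((P.eraseLead.eval x : ℤ) : ℝ) := by rw [key x]; ring
      rw [this]; exact abs_sub _ _
    rw [abs_mul, abs_pow] at h1
    have : 0 ≤ |(x : ℝ)| ^ P.natDegree := by positivity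
    nlinarith
  by_cases he : P.eraseLead = 0
  · refine ⟨1, le_rfl, fun x _ => ?_⟩
    have h := key2 x
    rw [he] at h
    simp only [eval_zero, Int.cast_zero, abs_zero, add_zero] at h
    linarith [abs_nonneg ((P.eval x : ℤ) : ℝ)]
  · obtain ⟨C, hC, hb⟩ := aux_upper P.eraseLead
    refine ⟨max 1 (2 * C), le_max_left _ _, fun x hx => ?_⟩
    have hx1 : 1 ≤ |(x : ℝ)| := (le_max_left _ _).trans hx
    have hx2 : 2 * C ≤ |(x : ℝ)| := (le_max_right _ _).trans hx
    have h := key2 x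
    have h' := hb x _ hx1 le_rfl
    have hd : P.eraseLead.natDegree + 1 ≤ P.natDegree := by
      have := P.eraseLead_natDegree_lt_or_eraseLead_eq_zero
      tauto
    have h3 : |(x : ℝ)| ^ (P.eraseLead.natDegree + 1) ≤ |(x : ℝ)| ^ P.natDegree :=
      pow_le_pow_right₀ hx1 hd
    rw [pow_succ] at h3
    have h4 : 0 ≤ |(x : ℝ)| ^ P.eraseLead.natDegree := by positivity
    nlinarith

lemma aux_clear (p : Polynomial ℚ) : ∃ (b : ℤ) (q : Polynomial ℤ), b ≠ 0 ∧
    q.map (Int.castRingHom ℚ) = C (b : ℚ) * p := by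
  obtain ⟨b, hb0, hb⟩ := IsLocalization.integerNormalization_spec (nonZeroDivisors ℤ) p
  refine ⟨b, _, nonZeroDivisors.ne_zero hb0, hb.trans ?_⟩
  ext i
  simp

lemma aux_coprime (F1 F2 : Polynomial ℤ) (hF1 : F1 ≠ 0)
    (h3 : ∀ d : Polynomial ℤ, d ∣ F1 → d ∣ F2 → d.natDegree = 0) :
    IsCoprime (F1.map (Int.castRingHom ℚ)) (F2.map (Int.castRingHom ℚ)) := by
  have hinj : Function.Injective (Int.castRingHom ℚ) := Int.cast_injective
  rw [← EuclideanDomain.gcd_isUnit_iff]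
  set h := EuclideanDomain.gcd (F1.map (Int.castRingHom ℚ)) (F2.map (Int.castRingHom ℚ)) with hh
  have d1 : h ∣ F1.map (Int.castRingHom ℚ) := EuclideanDomain.gcd_dvd_left _ _
  have d2 : h ∣ F2.map (Int.castRingHom ℚ) := EuclideanDomain.gcd_dvd_right _ _
  have hh0 : h ≠ 0 := by
    rintro h0
    rw [h0, zero_dvd_iff] at d1
    exact hF1 ((Polynomial.map_eq_zero_iff hinj).1 d1)
  obtain ⟨b, q, hb0, hq⟩ := aux_clear h
  have hbu : IsUnit (C (b : ℚ)) := Polynomial.isUnit_C.2 (by simpa using hb0)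
  have hpq : q.primPart ∣ q := Polynomial.primPart_dvd q
  have hph : q.primPart.map (Int.castRingHom ℚ) ∣ h := by
    have h1 : q.primPart.map (Int.castRingHom ℚ) ∣ C (b : ℚ) * h := by
      rw [← hq]; exact Polynomial.map_dvd _ hpq
    exact (hbu.dvd_mul_left).1 h1
  have hprim := q.isPrimitive_primPart
  have e1 := (Polynomial.IsPrimitive.Int.dvd_iff_map_cast_dvd_map_cast _ F1 hprim).2 (hph.trans d1)
  have e2 := (Polynomial.IsPrimitive.Int.dvd_iff_map_cast_dvd_map_cast _ F2 hprim).2 (hph.trans d2)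
  have e3 := h3 _ e1 e2
  rw [Polynomial.natDegree_primPart] at e3
  have e4 : h.natDegree = 0 := by
    rw [← Polynomial.natDegree_C_mul (a := (b : ℚ)) (by exact_mod_cast hb0), ← hq,
      Polynomial.natDegree_map_eq_of_injective hinj, e3]
  exact Polynomial.isUnit_iff_degree_eq_zero.2 ((Polynomial.degree_eq_iff_natDegree_eq hh0).2 e4)

lemma aux_bezout (A B : Polynomial ℤ)
    (h : IsCoprime (A.map (Int.castRingHom ℚ)) (B.map (Int.castRingHom ℚ))) :
    ∃ R : ℤ, R ≠ 0 ∧ ∃ u v : Polynomial ℤ, u * A + v * B = C R := by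
  have hinj : Function.Injective (Int.castRingHom ℚ) := Int.cast_injective
  obtain ⟨u, v, huv⟩ := h
  obtain ⟨b, p, hb0, hp⟩ := aux_clear u
  obtain ⟨c, q, hc0, hq⟩ := aux_clear v
  refine ⟨b * c, mul_ne_zero hb0 hc0, C c * p, C b * q, ?_⟩
  apply Polynomial.map_injective _ hinj
  have hC : ∀ z : ℤ, (C z).map (Int.castRingHom ℚ) = C (z : ℚ) := fun z => Polynomial.map_C _
  rw [Polynomial.map_add, Polynomial.map_mul, Polynomial.map_mul, Polynomial.map_mul,
    Polynomial.map_mul, hC, hC, hC, hp, hq, Int.cast_mul, C_mul]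
  linear_combination (C (b : ℚ) * C (c : ℚ)) * huv

lemma aux_abc (abc : ABCConjecture) (ε : ℝ) (hε : 0 < ε) : ∃ K : ℝ, 0 < K ∧
    ∀ a b c : ℤ, a ≠ 0 → b ≠ 0 → c ≠ 0 → IsCoprime a b → a + b = c →
    |(c : ℝ)| ≤ K * ((∏ p ∈ (a * b * c).natAbs.primeFactors, p : ℕ) : ℝ) ^ (1 + ε) := by
  obtain ⟨K, hK⟩ := abc ε hε
  refine ⟨max K 1, by positivity, ?_⟩
  intro a b c ha hb hc hab h
  have hac : IsCoprime a c := by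
    rw [← h]; obtain ⟨u, v, huv⟩ := hab; exact ⟨u - v, v, by linear_combination huv⟩
  have hbc : IsCoprime b c := by
    rw [← h]; obtain ⟨u, v, huv⟩ := hab; exact ⟨v - u, u, by linear_combination huv⟩
  rw [Int.isCoprime_iff_gcd_eq_one] at hab hac hbc
  have ha' := Int.natAbs_pos.2 ha
  have hb' := Int.natAbs_pos.2 hb
  have hc' := Int.natAbs_pos.2 hc
  set Q : ℝ := ((∏ p ∈ (a * b * c).natAbs.primeFactors, p : ℕ) : ℝ) ^ (1 + ε) with hQ
  have hQ0 : 0 ≤ Q := by positivity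
  have hcc : |(c : ℝ)| = (c.natAbs : ℝ) := by rw [Nat.cast_natAbs, Int.cast_abs]
  rw [hcc]
  have fin : ∀ z : ℕ, c.natAbs ≤ z → (z : ℝ) ≤ K * Q → (c.natAbs : ℝ) ≤ max K 1 * Q := by
    intro z hz hz'
    have : (c.natAbs : ℝ) ≤ z := by exact_mod_cast hz
    have h2 : K * Q ≤ max K 1 * Q := mul_le_mul_of_nonneg_right (le_max_left _ _) hQ0
    linarith
  have : a.natAbs + b.natAbs = c.natAbs ∨ a.natAbs + c.natAbs = b.natAbs ∨
    b.natAbs + c.natAbs = a.natAbs := by omega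
  rcases this with h' | h' | h'
  · refine fin c.natAbs le_rfl ?_
    have := hK _ _ _ ha' hb' hc' hab h'
    rwa [← Int.natAbs_mul, ← Int.natAbs_mul] at this
  · refine fin b.natAbs (by omega) ?_
    have := hK _ _ _ ha' hc' hb' hac h'
    rwa [← Int.natAbs_mul, ← Int.natAbs_mul, mul_right_comm] at this
  · refine fin a.natAbs (by omega) ?_
    have := hK _ _ _ hb' hc' ha' hbc h'
    rwa [← Int.natAbs_mul, ← Int.natAbs_mul, show b * c * a = a * b * c by ring] at this

lemma aux_abc2 (abc : ABCConjecture) (ε : ℝ) (hε : 0 < ε) (R : ℤ) (hR : R ≠ 0) :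
    ∃ K : ℝ, 0 < K ∧ ∀ a b c : ℤ, a ≠ 0 → b ≠ 0 → c ≠ 0 →
    (∃ u v : ℤ, u * a + v * b = R) → a + b = c →
    ∀ S : ℤ, S ≠ 0 → (∀ p : ℕ, p.Prime → (p : ℤ) ∣ a * b * c → (p : ℤ) ∣ S) →
    |(c : ℝ)| ≤ K * |(S : ℝ)| ^ (1 + ε) := by
  obtain ⟨K, hK0, hK⟩ := aux_abc abc ε hε
  refine ⟨|(R : ℝ)| * K, by positivity, ?_⟩
  rintro a b c ha hb hc ⟨u, v, huv⟩ h S hS hp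
  have hg : 0 < Int.gcd a b := Int.gcd_pos_of_ne_zero_left _ ha
  obtain ⟨d, a', b', hd, hcop, rfl, rfl⟩ : ∃ d a' b' : ℤ, d ≠ 0 ∧ IsCoprime a' b' ∧ a = d * a' ∧
      b = d * b' := by
    obtain ⟨a', b', h1, h2, h3⟩ := Int.exists_gcd_one hg
    exact ⟨Int.gcd a b, a', b', by positivity, Int.isCoprime_iff_gcd_eq_one.2 h1,
      by rw [mul_comm]; exact h2, by rw [mul_comm]; exact h3⟩
  have hdR : d ∣ R := ⟨u * a' + v * b', by rw [← huv]; ring⟩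
  obtain rfl : c = d * (a' + b') := by rw [← h]; ring
  have hdle : |(d : ℝ)| ≤ |(R : ℝ)| := by
    have : |d| ≤ |R| := by
      rw [← Int.natCast_natAbs, ← Int.natCast_natAbs]
      exact_mod_cast Nat.le_of_dvd (Int.natAbs_pos.2 hR) (Int.natAbs_dvd_natAbs.2 hdR)
    exact_mod_cast this
  have hkey := hK a' b' (a' + b') (right_ne_zero_of_mul ha) (right_ne_zero_of_mul hb)
    (right_ne_zero_of_mul hc) hcop rfl
  have hrad : ((∏ p ∈ (a' * b' * (a' + b')).natAbs.primeFactors, p : ℕ) : ℝ) ≤ |(S : ℝ)| := by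
    have hSS : |(S : ℝ)| = (S.natAbs : ℝ) := by rw [Nat.cast_natAbs, Int.cast_abs]
    rw [hSS]
    norm_cast
    refine Nat.le_of_dvd (Int.natAbs_pos.2 hS) ?_
    refine (Finset.prod_dvd_prod_of_subset _ S.natAbs.primeFactors _ ?_).trans
      (Nat.prod_primeFactors_dvd _)
    intro p hpm
    have hpp := Nat.prime_of_mem_primeFactors hpm
    have hpd := Nat.dvd_of_mem_primeFactors hpm
    rw [Nat.mem_primeFactors]
    refine ⟨hpp, ?_, Int.natAbs_ne_zero.2 hS⟩
    rw [← Int.natCast_dvd] at hpd ⊢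
    refine hp p hpp (hpd.trans ⟨d ^ 3, by ring⟩)
  calc |((d * (a' + b') : ℤ) : ℝ)| = |(d : ℝ)| * |((a' + b' : ℤ) : ℝ)| := by
        rw [Int.cast_mul, abs_mul]
    _ ≤ |(R : ℝ)| * (K * |(S : ℝ)| ^ (1 + ε)) := by
        refine mul_le_mul hdle (hkey.trans ?_) (abs_nonneg _) (abs_nonneg _)
        refine mul_le_mul_of_nonneg_left ?_ hK0.le
        exact Real.rpow_le_rpow (by positivity) hrad (by linarith)
    _ = _ := by ring

/-- Core: `A + B = f` in terms of radicals. -/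
lemma aux_core (abc : ABCConjecture) (A B F1 F2 Gr f G : Polynomial ℤ)
    (hf : f = A + B) (hA : A ≠ 0) (hB : B ≠ 0) (hF1 : F1 ≠ 0) (hF2 : F2 ≠ 0) (hGr : Gr ≠ 0)
    (hpA : ∀ (x : ℤ) (p : ℕ), p.Prime → (p : ℤ) ∣ A.eval x → (p : ℤ) ∣ F1.eval x)
    (hpB : ∀ (x : ℤ) (p : ℕ), p.Prime → (p : ℤ) ∣ B.eval x → (p : ℤ) ∣ F2.eval x)
    (hpG : ∀ (x : ℤ) (p : ℕ), p.Prime → (p : ℤ) ∣ G.eval x → (p : ℤ) ∣ Gr.eval x)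
    (hGG : ∀ x : ℤ, Gr.eval x = 0 → G.eval x = 0)
    (hcop : IsCoprime (A.map (Int.castRingHom ℚ)) (B.map (Int.castRingHom ℚ)))
    (h1 : f.natDegree < G.natDegree)
    (h2 : 1 + (F1 * F2 * Gr).natDegree < f.natDegree) :
    {p : ℤ × ℤ | f.eval p.1 = G.eval p.2}.Finite := by
  have hf0 : f ≠ 0 := by rintro rfl; simp at h2
  have hG0 : G ≠ 0 := by rintro rfl; simp at h1
  rw [natDegree_mul (mul_ne_zero hF1 hF2) hGr, natDegree_mul hF1 hF2] at h2
  set D := f.natDegree with hD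
  have hD2 : 2 ≤ D := by omega
  have hDpos : (0 : ℝ) < D := by positivity
  obtain ⟨R, hR, u, v, huv⟩ := aux_bezout A B hcop
  obtain ⟨K, hK0, hK⟩ := aux_abc2 abc (1 / D) (by positivity) R hR
  obtain ⟨C1, hC1, hC1'⟩ := aux_upper F1
  obtain ⟨C2, hC2, hC2'⟩ := aux_upper F2
  obtain ⟨C3, hC3, hC3'⟩ := aux_upper Gr
  obtain ⟨C4, hC4, hC4'⟩ := aux_upper f
  obtain ⟨L1, hL1, hL1'⟩ := aux_lower F1 hF1
  obtain ⟨L2, hL2, hL2'⟩ := aux_lower F2 hF2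
  obtain ⟨L3, hL3, hL3'⟩ := aux_lower f hf0
  obtain ⟨L4, hL4, hL4'⟩ := aux_lower G hG0
  obtain ⟨L5, hL5, hL5'⟩ := aux_lower A hA
  obtain ⟨L6, hL6, hL6'⟩ := aux_lower B hB
  -- if `y` exceeds `x` then `y` is bounded
  have hy : ∀ x y : ℤ, f.eval x = G.eval y → |(x : ℝ)| < |(y : ℝ)| →
      |(y : ℝ)| ≤ max L4 (2 * C4) := by
    intro x y hxy hlt
    by_contra hcon
    push Not at hcon
    have ha : L4 < |(y : ℝ)| := (le_max_left _ _).trans_lt hcon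
    have hb : 2 * C4 < |(y : ℝ)| := (le_max_right _ _).trans_lt hcon
    have hy1 : 1 ≤ |(y : ℝ)| := by linarith
    have e1 := hL4' y ha.le
    have e2 := hC4' x _ hy1 hlt.le
    rw [hxy] at e2
    have e3 : |(y : ℝ)| ^ (D + 1) ≤ |(y : ℝ)| ^ G.natDegree := pow_le_pow_right₀ hy1 h1
    rw [pow_succ] at e3
    have e4 : 0 < |(y : ℝ)| ^ D := by positivity
    nlinarith
  set M : ℝ := 2 * (K * (C1 * C2 * C3) ^ (1 + 1 / (D : ℝ))) with hM
  have hx : ∀ x y : ℤ, f.eval x = G.eval y → |(y : ℝ)| ≤ |(x : ℝ)| →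
      |(x : ℝ)| ≤ L1 + L2 + L3 + L5 + L6 + M := by
    intro x y hxy hle
    by_contra hcon
    push Not at hcon
    have hM0 : 0 ≤ M := by positivity
    have hX1 : 1 ≤ |(x : ℝ)| := by linarith
    have hXpos : 0 < |(x : ℝ)| := by linarith
    have nz : ∀ z k : ℤ, ∀ d : ℕ, |(x : ℝ)| ^ d ≤ 2 * |(z : ℝ)| → z ≠ 0 := by
      rintro z k d hz rfl
      have : 0 < |(x : ℝ)| ^ d := by positivity
      simp at hz
      linarith
    have n1 : F1.eval x ≠ 0 := nz _ 0 _ (hL1' x (by linarith))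
    have n2 : F2.eval x ≠ 0 := nz _ 0 _ (hL2' x (by linarith))
    have e3 := hL3' x (by linarith)
    have n3 : f.eval x ≠ 0 := nz _ 0 _ e3
    have n5 : A.eval x ≠ 0 := nz _ 0 _ (hL5' x (by linarith))
    have n6 : B.eval x ≠ 0 := nz _ 0 _ (hL6' x (by linarith))
    have n4 : Gr.eval y ≠ 0 := fun h => n3 (hxy.trans (hGG y h))
    have main := hK (A.eval x) (B.eval x) (f.eval x) n5 n6 n3
      ⟨u.eval x, v.eval x, by
        have := congrArg (eval x) huv
        simpa using this⟩ (by rw [hf, eval_add]) (F1.eval x * F2.eval x * Gr.eval y)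
      (mul_ne_zero (mul_ne_zero n1 n2) n4) (by
        intro p hp hd
        have hpi := Nat.prime_iff_prime_int.1 hp
        rcases hpi.dvd_or_dvd hd with h | h
        · rcases hpi.dvd_or_dvd h with h | h
          · exact ((hpA x p hp h).mul_right _).mul_right _
          · exact ((hpB x p hp h).mul_left _).mul_right _
        · rw [hxy] at h
          exact (hpG y p hp h).mul_left _)
    have hS : |((F1.eval x * F2.eval x * Gr.eval y : ℤ) : ℝ)| ≤
        (C1 * C2 * C3) * |(x : ℝ)| ^ (D - 2) := by
      push_cast
      rw [abs_mul, abs_mul]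
      calc _ ≤ (C1 * |(x : ℝ)| ^ F1.natDegree) * (C2 * |(x : ℝ)| ^ F2.natDegree) *
            (C3 * |(x : ℝ)| ^ Gr.natDegree) := by
              gcongr
              · exact hC1' x _ hX1 le_rfl
              · exact hC2' x _ hX1 le_rfl
              · exact hC3' y _ hX1 hle
        _ = (C1 * C2 * C3) * |(x : ℝ)| ^ (F1.natDegree + F2.natDegree + Gr.natDegree) := by
              rw [pow_add, pow_add]; ring
        _ ≤ _ := by
              refine mul_le_mul_of_nonneg_left (pow_le_pow_right₀ hX1 (by omega)) (by positivity)
    have hpow : (|(x : ℝ)| ^ (D - 2)) ^ (1 + 1 / (D : ℝ)) ≤ |(x : ℝ)| ^ (D - 1) := by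
      rw [← Real.rpow_natCast, ← Real.rpow_mul hXpos.le, ← Real.rpow_natCast]
      refine Real.rpow_le_rpow_of_exponent_le hX1 ?_
      rw [Nat.cast_sub hD2, Nat.cast_sub (by omega)]
      push_cast
      have : (D : ℝ) * (1 / D) = 1 := by field_simp
      have : 0 < 1 / (D : ℝ) := by positivity
      nlinarith
    have hS2 : |((F1.eval x * F2.eval x * Gr.eval y : ℤ) : ℝ)| ^ (1 + 1 / (D : ℝ)) ≤
        (C1 * C2 * C3) ^ (1 + 1 / (D : ℝ)) * |(x : ℝ)| ^ (D - 1) := by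
      refine (Real.rpow_le_rpow (abs_nonneg _) hS (by positivity)).trans ?_
      rw [Real.mul_rpow (by positivity) (by positivity)]
      exact mul_le_mul_of_nonneg_left hpow (by positivity)
    have hfin : |(x : ℝ)| ^ D ≤ M * |(x : ℝ)| ^ (D - 1) := by
      calc _ ≤ _ := e3
        _ ≤ 2 * (K * ((C1 * C2 * C3) ^ (1 + 1 / (D : ℝ)) * |(x : ℝ)| ^ (D - 1))) := by
            have := mul_le_mul_of_nonneg_left hS2 hK0.le
            linarith
        _ = _ := by rw [hM]; ring
    have hDD : |(x : ℝ)| ^ D = |(x : ℝ)| * |(x : ℝ)| ^ (D - 1) := by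
      rw [← pow_succ']; congr 1; omega
    rw [hDD] at hfin
    have := le_of_mul_le_mul_right hfin (by positivity)
    linarith
  set T : ℝ := max (max L4 (2 * C4)) (L1 + L2 + L3 + L5 + L6 + M) with hT
  have hb : ∀ x y : ℤ, f.eval x = G.eval y → |(x : ℝ)| ≤ T ∧ |(y : ℝ)| ≤ T := by
    intro x y hxy
    rcases lt_or_ge |(x : ℝ)| |(y : ℝ)| with h | h
    · have h' := (hy x y hxy h).trans (le_max_left _ (L1 + L2 + L3 + L5 + L6 + M))
      exact ⟨h.le.trans h', h'⟩
    · have h' := (hx x y hxy h).trans (le_max_right (max L4 (2 * C4)) _)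
      exact ⟨h', h.trans h'⟩
  refine Set.Finite.subset ((Set.finite_Icc (-⌈T⌉) ⌈T⌉).prod (Set.finite_Icc (-⌈T⌉) ⌈T⌉)) ?_
  rintro ⟨x, y⟩ hxy
  have hc : ∀ z : ℤ, |(z : ℝ)| ≤ T → z ∈ Set.Icc (-⌈T⌉) ⌈T⌉ := by
    intro z hz
    have : |z| ≤ ⌈T⌉ := by
      have := hz.trans (Int.le_ceil T)
      exact_mod_cast this
    exact abs_le.1 this
  obtain ⟨p, q⟩ := hb x y hxy
  exact ⟨hc x p, hc y q⟩

lemma aux_prime {k : ℕ} (h : Fin k → Polynomial ℤ) (e : Fin k → ℕ) (x : ℤ) (p : ℕ)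
    (hp : p.Prime) (hd : (p : ℤ) ∣ (∏ i, h i ^ e i).eval x) : (p : ℤ) ∣ (∏ i, h i).eval x := by
  have hpi := Nat.prime_iff_prime_int.1 hp
  rw [eval_prod] at hd ⊢
  obtain ⟨i, hi, hd⟩ := (Prime.dvd_finsetProd_iff hpi _).1 hd
  rw [eval_pow] at hd
  exact (hpi.dvd_of_dvd_pow hd).trans (Finset.dvd_prod_of_mem (fun i => eval x (h i)) hi)

theorem stmt4 (abc : ABCConjecture)
    (l m n : ℕ)
    (f1 : Fin l → Polynomial ℤ) (f2 : Fin m → Polynomial ℤ) (g : Fin n → Polynomial ℤ)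
    (α : Fin l → ℕ) (β : Fin m → ℕ) (γ : Fin n → ℕ)
    (hα : ∀ i, 0 < α i) (hβ : ∀ j, 0 < β j) (hγ : ∀ k, 0 < γ k)
    (f G : Polynomial ℤ)
    (hf : f = (∏ i, f1 i ^ α i) + (∏ j, f2 j ^ β j) ∨
          f = (∏ i, f1 i ^ α i) - (∏ j, f2 j ^ β j))
    (hG : G = ∏ k, g k ^ γ k)
    (h1 : f.natDegree < G.natDegree)
    (h2 : 1 + ((∏ i, f1 i) * (∏ j, f2 j) * (∏ k, g k)).natDegree < f.natDegree)
    (h3 : ∀ d : Polynomial ℤ, d ∣ (∏ i, f1 i) → d ∣ (∏ j, f2 j) → d.natDegree = 0)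
    (h4a : 0 < (∏ i, f1 i).leadingCoeff)
    (h4b : 0 < (∏ j, f2 j).leadingCoeff)
    (h4c : 0 < (∏ k, g k).leadingCoeff) :
    {p : ℤ × ℤ | f.eval p.1 = G.eval p.2}.Finite := by
  have hF1 : (∏ i, f1 i) ≠ 0 := by intro h; rw [h] at h4a; simp at h4a
  have hF2 : (∏ j, f2 j) ≠ 0 := by intro h; rw [h] at h4b; simp at h4b
  have hGr : (∏ k, g k) ≠ 0 := by intro h; rw [h] at h4c; simp at h4c
  have hA : (∏ i, f1 i ^ α i) ≠ 0 := Finset.prod_ne_zero_iff.2 fun i hi =>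
    pow_ne_zero _ (Finset.prod_ne_zero_iff.1 hF1 i hi)
  have hB : (∏ j, f2 j ^ β j) ≠ 0 := Finset.prod_ne_zero_iff.2 fun i hi =>
    pow_ne_zero _ (Finset.prod_ne_zero_iff.1 hF2 i hi)
  have hcop := aux_coprime _ _ hF1 h3
  have hcop2 : IsCoprime ((∏ i, f1 i ^ α i).map (Int.castRingHom ℚ))
      ((∏ j, f2 j ^ β j).map (Int.castRingHom ℚ)) := by
    rw [Polynomial.map_prod, Polynomial.map_prod] at hcop ⊢
    refine IsCoprime.prod_left fun i hi => IsCoprime.prod_right fun j hj => ?_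
    rw [Polynomial.map_pow, Polynomial.map_pow]
    refine IsCoprime.pow ?_
    exact (IsCoprime.prod_right_iff.1 (IsCoprime.prod_left_iff.1 hcop i hi)) j hj
  have hpG : ∀ (x : ℤ) (p : ℕ), p.Prime → (p : ℤ) ∣ G.eval x → (p : ℤ) ∣ (∏ k, g k).eval x := by
    intro x p hp hd
    rw [hG] at hd
    exact aux_prime g γ x p hp hd
  have hGG : ∀ x : ℤ, (∏ k, g k).eval x = 0 → G.eval x = 0 := by
    intro x hx
    rw [eval_prod] at hx
    obtain ⟨k, hk, hx⟩ := Finset.prod_eq_zero_iff.1 hx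
    rw [hG, eval_prod]
    refine Finset.prod_eq_zero hk ?_
    rw [eval_pow, hx, zero_pow (hγ k).ne']
  rcases hf with hf | hf
  · exact aux_core abc _ _ _ _ _ f G hf hA hB hF1 hF2 hGr (aux_prime f1 α) (aux_prime f2 β)
      hpG hGG hcop2 h1 h2
  · refine aux_core abc _ (-∏ j, f2 j ^ β j) _ _ _ f G (by rw [hf, sub_eq_add_neg]) hA
      (neg_ne_zero.2 hB) hF1 hF2 hGr (aux_prime f1 α) ?_ hpG hGG ?_ h1 h2
    · intro x p hp hd
      rw [eval_neg, dvd_neg] at hd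
      exact aux_prime f2 β x p hp hd
    · rw [Polynomial.map_neg]
      exact hcop2.neg_right
end

section
/- Let f(x) be a monic polynomial of degree m with integer coefficients such that not all complex roots of f are integers (equivalently, f is not a product of m monic linear polynomials with integer coefficients), and let q_1, q_2, ..., q_m be integers. Then the equation (y + q_1)(y + q_2)···(y + q_m) = f(x) has only finitely many solutions (x, y) with x and y negative integers. -/
open Polynomial

lemma aux_multiset (s : Multiset ℂ) : ∃ R : ℝ, 0 ≤ R ∧ ∀ z : ℂ,
    ‖(s.map (fun r => z - r)).prod‖ ≤ (‖z‖ + R) ^ s.card ∧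
    (R ≤ ‖z‖ → (‖z‖ - R) ^ s.card ≤ ‖(s.map (fun r => z - r)).prod‖) := by
  induction s using Multiset.induction_on with
  | empty => exact ⟨0, le_rfl, fun z => by simp⟩
  | cons a s ih =>
    obtain ⟨R, hR, h⟩ := ih
    refine ⟨R + ‖a‖, by positivity, fun z => ?_⟩
    have hz := norm_nonneg z
    have ha := norm_nonneg a
    have h1 := norm_sub_le z a
    have h2 := norm_sub_norm_le z a
    simp only [Multiset.map_cons, Multiset.prod_cons, norm_mul, Multiset.card_cons, pow_succ']
    refine ⟨?_, fun hle => ?_⟩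
    · refine mul_le_mul (by linarith) ((h z).1.trans ?_) (norm_nonneg _) (by positivity)
      exact pow_le_pow_left₀ (by linarith) (by linarith) _
    · refine mul_le_mul (by linarith) (le_trans ?_ ((h z).2 (by linarith)))
        (pow_nonneg (by linarith) _) (norm_nonneg _)
      exact pow_le_pow_left₀ (by linarith) (by linarith) _

lemma aux_poly (f : Polynomial ℤ) (hf : f.Monic) : ∃ R : ℝ, 0 ≤ R ∧ ∀ x : ℤ,
    |((f.eval x : ℤ) : ℝ)| ≤ (|(x : ℝ)| + R) ^ f.natDegree ∧
    (R ≤ |(x : ℝ)| → (|(x : ℝ)| - R) ^ f.natDegree ≤ |((f.eval x : ℤ) : ℝ)|) := by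
  set g := f.map (Int.castRingHom ℂ) with hg
  have hgm : g.Monic := hf.map _
  have hs : g.Splits := IsAlgClosed.splits g
  have hcard : g.roots.card = f.natDegree := by
    rw [← hf.natDegree_map (Int.castRingHom ℂ)]
    exact hs.natDegree_eq_card_roots.symm
  obtain ⟨R, hR, h⟩ := aux_multiset g.roots
  refine ⟨R, hR, fun x => ?_⟩
  have hev : ((f.eval x : ℤ) : ℂ) = (g.roots.map (fun r => (x : ℂ) - r)).prod := by
    have h1 : ((f.eval x : ℤ) : ℂ) = g.eval (x : ℂ) := by
      simp [hg, Polynomial.eval_intCast_map]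
    rw [h1, hs.eval_eq_prod_roots_of_monic hgm]
  have := h (x : ℂ)
  rw [← hev, hcard, Complex.norm_intCast, Complex.norm_intCast] at this
  exact this

lemma aux_bound (f g : Polynomial ℤ) (hf : f.Monic) (hg : g.Monic)
    (hd : f.natDegree = g.natDegree) (h0 : f.natDegree ≠ 0) :
    ∃ R : ℝ, 0 ≤ R ∧ ∀ x y : ℤ, f.eval x = g.eval y → |(x : ℝ)| ≤ |(y : ℝ)| + R := by
  obtain ⟨R, hR, h⟩ := aux_poly f hf
  obtain ⟨S, hS, k⟩ := aux_poly g hg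
  refine ⟨R + S, by positivity, fun x y hxy => ?_⟩
  have hy := abs_nonneg (y : ℝ)
  by_cases hx : R ≤ |(x : ℝ)|
  · have h1 := (h x).2 hx
    have h2 := (k y).1
    rw [hxy] at h1
    rw [← hd] at h2
    have := (pow_le_pow_iff_left₀ (by linarith) (by linarith) h0).1 (h1.trans h2)
    linarith
  · linarith

theorem stmt17 (m : ℕ) (f : Polynomial ℤ) (hf : f.Monic) (hdeg : f.natDegree = m)
    (hroots : ¬ ∃ c : Fin m → ℤ, f = ∏ i, (X + C (c i)))
    (q : Fin m → ℤ) :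
    {p : ℤ × ℤ | p.1 < 0 ∧ p.2 < 0 ∧ (∏ i, (p.2 + q i)) = f.eval p.1}.Finite := by
  have hm : f.natDegree ≠ 0 := by
    intro h0
    have hm0 : m = 0 := by omega
    subst hm0
    exact hroots ⟨fun _ => 0, by simpa using hf.natDegree_eq_zero.1 h0⟩
  set g : Polynomial ℤ := ∏ i, (X + C (q i)) with hgdef
  have hg : g.Monic := monic_prod_of_monic _ _ fun i _ => monic_X_add_C _
  have hgd : g.natDegree = m := by
    rw [hgdef, natDegree_prod_of_monic _ _ fun i _ => monic_X_add_C _]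
    simp only [natDegree_X_add_C]
    simp
  have hge : ∀ y, g.eval y = ∏ i, (y + q i) := fun y => by simp [hgdef, eval_prod]
  obtain ⟨R, hR, h1⟩ := aux_bound f g hf hg (by omega) hm
  obtain ⟨S, hS, h2⟩ := aux_bound g f hg hf (by omega) (by omega)
  obtain ⟨N, hN⟩ := exists_nat_ge (R + S)
  refine Set.Finite.subset (Set.Finite.biUnion (Set.finite_Icc (-(N : ℤ)) N)
    (t := fun k => (fun x : ℤ => (x, x + k)) '' {x | (g.comp (X + C k) - f).IsRoot x}) ?_) ?_
  · intro k _
    refine Set.Finite.image _ (Polynomial.finite_setOfPred_isRoot fun h => hroots ⟨fun i => k + q i, ?_⟩)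
    rw [← sub_eq_zero.1 h, hgdef, prod_comp]
    refine Finset.prod_congr rfl fun i _ => ?_
    simp [add_assoc]
  · rintro ⟨x, y⟩ ⟨hx, hy, he⟩
    simp only at hx hy he
    rw [← hge] at he
    have hx' : (x : ℝ) < 0 := by exact_mod_cast hx
    have hy' : (y : ℝ) < 0 := by exact_mod_cast hy
    have a := h1 x y he.symm
    have b := h2 y x he
    rw [abs_of_neg hx', abs_of_neg hy'] at a b
    have c1 : ((y - x : ℤ) : ℝ) ≤ ((N : ℤ) : ℝ) := by push_cast; linarith
    have c2 : ((-(N : ℤ) : ℤ) : ℝ) ≤ ((y - x : ℤ) : ℝ) := by push_cast; linarith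
    refine Set.mem_biUnion (x := y - x) ⟨by exact_mod_cast c2, by exact_mod_cast c1⟩
      ⟨x, ?_, by simp⟩
    simp [he]
end
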